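/- Let S and A be nonempty finite sets, ρ ∈ Δ(S), π* ∈ Δ(A|S), and let D = ((s_1,a_1),…,(s_n,a_n)) be n i.i.d. samples from ρ×π*. Let π̂ ∈ Δ(A|S) be any conditional distribution satisfying π̂(·|s) = π*(·|s) for every s appearing among s_1,…,s_n. Then for every δ ∈ (0, 1/10], with probability at least 1 − δ, TV(π̂ ‖ π* | ρ) ≤ 4|S|/(9n) + 3·√|S|·log(1/δ)/n. -/

import Mathlib

open Finset

/-- `p` is a probability distribution on the finite set `A`. -/
def IsDist {A : Type} [Fintype A] (p : A → ℝ) : Prop :=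
  (∀ a, 0 ≤ p a) ∧ ∑ a, p a = 1

/-- `π` is a conditional probability distribution in `Δ(A|S)`. -/
def IsCondDist {S A : Type} [Fintype A] (π : S → A → ℝ) : Prop :=
  ∀ s, IsDist (π s)

/-- Conditional total variation `TV(π ‖ π' | ρ)`. -/
noncomputable def condTV {S A : Type} [Fintype S] [Fintype A]
    (ρ : S → ℝ) (π π' : S → A → ℝ) : ℝ :=
  ∑ s, ρ s * ((1 / 2) * ∑ a, |π s a - π' s a|)

/-- Probability of the dataset `D` under `n` i.i.d. samples from `ρ × π`. -/
noncomputable def wt {S A : Type} {n : ℕ} (ρ : S → ℝ) (π : S → A → ℝ)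
    (D : Fin n → S × A) : ℝ :=
  ∏ i, ρ (D i).1 * π (D i).1 (D i).2

open scoped Classical

/-! At sampled inputs the learner agrees with `π*`, and elsewhere the total variation is at most
`1`, so the error is at most the missing mass `M`, the `ρ`-mass of the unsampled inputs.

A set `T` of inputs is missed entirely with probability
`(1 - ρ(T)) ^ n ≤ ∏ s ∈ T, exp (-n ρ(s))`. Expanding `exp (t M)` over the subsets of the unsampled
inputs therefore bounds its expectation by `∏ s, (1 + (exp (t ρ(s)) - 1) exp (-n ρ(s)))`, as if the
inputs were missed independently. For `t = n / 3` each factor is at most `exp (4 / 27)`, and the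
exponential Markov inequality concludes. -/

lemma exp_div_three_sub_one_mul_exp_neg_le (x : ℝ) :
    (Real.exp (x / 3) - 1) * Real.exp (-x) ≤ 4 / 27 := by
  set u := Real.exp (-(x / 3)) with hu
  have hu_nonneg : 0 ≤ u + 1 / 3 := by positivity
  have hcube : Real.exp (-x) = u ^ 3 := by
    rw [hu, ← Real.exp_nat_mul]
    congr 1
    push_cast
    ring
  have hinv : Real.exp (x / 3) * u = 1 := by
    rw [hu, ← Real.exp_add, add_neg_cancel, Real.exp_zero]
  calc (Real.exp (x / 3) - 1) * Real.exp (-x)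
      = u ^ 2 - u ^ 3 := by rw [hcube]; linear_combination u ^ 2 * hinv
    _ = 4 / 27 - (u - 2 / 3) ^ 2 * (u + 1 / 3) := by ring
    _ ≤ 4 / 27 := sub_le_self _ (mul_nonneg (sq_nonneg _) hu_nonneg)

lemma sum_ite_le_sum_ite {Ω : Type*} [Fintype Ω] {w : Ω → ℝ} {P Q : Ω → Prop}
    [DecidablePred P] [DecidablePred Q] (hw : ∀ ω, 0 ≤ w ω) (hPQ : ∀ ω, P ω → Q ω) :
    ∑ ω, (if P ω then w ω else 0) ≤ ∑ ω, if Q ω then w ω else 0 := by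
  simp only [← Finset.sum_filter]
  exact sum_le_sum_of_subset_of_nonneg
    (monotone_filter_right _ fun ω _ => hPQ ω) fun ω _ _ => hw ω

lemma one_sub_exp_le_sum_ite_of_sum_mul_exp_le {Ω : Type} [Fintype Ω] {w Z : Ω → ℝ}
    (hw : IsDist w) {t K : ℝ} (ht : 0 ≤ t)
    (hZ : ∑ ω, w ω * Real.exp (t * Z ω) ≤ Real.exp K) (b : ℝ) :
    1 - Real.exp (K - t * b) ≤ ∑ ω, if Z ω ≤ b then w ω else 0 := by
  have markov (ω : Ω) :
      w ω - w ω * Real.exp (t * Z ω) * Real.exp (-(t * b)) ≤ if Z ω ≤ b then w ω else 0 := by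
    rw [mul_assoc, ← Real.exp_add]
    split_ifs with h
    · exact sub_le_self _ (mul_nonneg (hw.1 ω) (Real.exp_pos _).le)
    · have hexp : 1 ≤ Real.exp (t * Z ω + -(t * b)) :=
        Real.one_le_exp (by linarith [mul_le_mul_of_nonneg_left (not_le.1 h).le ht])
      exact sub_nonpos.2 (le_mul_of_one_le_right (hw.1 ω) hexp)
  calc 1 - Real.exp (K - t * b)
      ≤ 1 - (∑ ω, w ω * Real.exp (t * Z ω)) * Real.exp (-(t * b)) := by
        rw [sub_eq_add_neg K, Real.exp_add]
        gcongr
    _ = ∑ ω, (w ω - w ω * Real.exp (t * Z ω) * Real.exp (-(t * b))) := by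
        rw [sum_sub_distrib, hw.2, sum_mul]
    _ ≤ _ := sum_le_sum fun ω _ => markov ω

/-- The inputs that do not occur in the sample `x`. -/
noncomputable def unseen {ι S : Type*} [Fintype S] (x : ι → S) : Finset S :=
  {s | s ∉ Set.range x}

/-- The missing mass of the sample `x`: the `ρ`-mass of the inputs that do not occur in it. -/
noncomputable def missingMass {ι S : Type*} [Fintype S] (ρ : S → ℝ) (x : ι → S) : ℝ :=
  ∑ s ∈ unseen x, ρ s

lemma subset_unseen_iff {S : Type*} [Fintype S] {n : ℕ} {T : Finset S} {x : Fin n → S} :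
    T ⊆ unseen x ↔ x ∈ Fintype.piFinset fun _ => Tᶜ := by
  simp only [unseen, subset_iff, mem_filter_univ, Set.mem_range, not_exists, Fintype.mem_piFinset,
    mem_compl]
  exact ⟨fun h i hi => h hi i rfl, fun h s hs i hi => h i (hi ▸ hs)⟩

lemma sum_prod_mul_prod_unseen_one_add {S R : Type*} [Fintype S] [CommSemiring R]
    {n : ℕ} (ρ c : S → R) :
    ∑ x : Fin n → S, (∏ i, ρ (x i)) * ∏ s ∈ unseen x, (1 + c s) =
      ∑ T : Finset S, (∏ s ∈ T, c s) * (∑ s ∈ Tᶜ, ρ s) ^ n := by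
  simp only [prod_one_add, sum_pow', mul_sum]
  rw [sum_comm' (t' := univ) (s' := fun T => Fintype.piFinset fun _ => Tᶜ)
    (by simp only [mem_powerset, subset_unseen_iff, mem_univ, true_and, and_true, implies_true])]
  simp only [mul_comm]

section MissingMass

variable {S : Type} [Fintype S] {ρ : S → ℝ}

lemma IsDist.sum_compl_pow_le (hρ : IsDist ρ) (T : Finset S) (n : ℕ) :
    (∑ s ∈ Tᶜ, ρ s) ^ n ≤ ∏ s ∈ T, Real.exp (-(n * ρ s)) := by
  have hcompl : ∑ s ∈ Tᶜ, ρ s = 1 - ∑ s ∈ T, ρ s := by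
    rw [← hρ.2, ← sum_add_sum_compl T, add_sub_cancel_left]
  calc (∑ s ∈ Tᶜ, ρ s) ^ n
      ≤ Real.exp (-∑ s ∈ T, ρ s) ^ n :=
        pow_le_pow_left₀ (sum_nonneg fun s _ => hρ.1 s) (hcompl ▸ Real.one_sub_le_exp_neg _) n
    _ = ∏ s ∈ T, Real.exp (-(n * ρ s)) := by
        rw [← Real.exp_nat_mul, ← Real.exp_sum, mul_neg, mul_sum, sum_neg_distrib]

lemma sum_prod_mul_exp_missingMass_le (hρ : IsDist ρ) {n : ℕ} {t : ℝ} (ht : 0 ≤ t) :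
    ∑ x : Fin n → S, (∏ i, ρ (x i)) * Real.exp (t * missingMass ρ x) ≤
      ∏ s, (1 + (Real.exp (t * ρ s) - 1) * Real.exp (-(n * ρ s))) := by
  have hexp (x : Fin n → S) : Real.exp (t * missingMass ρ x) =
      ∏ s ∈ unseen x, (1 + (Real.exp (t * ρ s) - 1)) := by
    simp only [missingMass, mul_sum, Real.exp_sum, add_sub_cancel]
  have hnonneg (s : S) : 0 ≤ Real.exp (t * ρ s) - 1 :=
    sub_nonneg.2 (Real.one_le_exp (mul_nonneg ht (hρ.1 s)))
  calc ∑ x : Fin n → S, (∏ i, ρ (x i)) * Real.exp (t * missingMass ρ x)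
      = ∑ T : Finset S, (∏ s ∈ T, (Real.exp (t * ρ s) - 1)) * (∑ s ∈ Tᶜ, ρ s) ^ n := by
        simp only [hexp]
        exact sum_prod_mul_prod_unseen_one_add ρ _
    _ ≤ ∑ T : Finset S,
          (∏ s ∈ T, (Real.exp (t * ρ s) - 1)) * ∏ s ∈ T, Real.exp (-(n * ρ s)) :=
        sum_le_sum fun T _ => mul_le_mul_of_nonneg_left (hρ.sum_compl_pow_le T n)
          (prod_nonneg fun s _ => hnonneg s)
    _ = ∏ s, (1 + (Real.exp (t * ρ s) - 1) * Real.exp (-(n * ρ s))) := by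
        simp only [prod_one_add, powerset_univ, prod_mul_distrib]

lemma sum_prod_mul_exp_third_missingMass_le (hρ : IsDist ρ) (n : ℕ) :
    ∑ x : Fin n → S, (∏ i, ρ (x i)) * Real.exp (n / 3 * missingMass ρ x) ≤
      Real.exp (Fintype.card S * (4 / 27)) := by
  have hfactor (s : S) : 1 + (Real.exp (n / 3 * ρ s) - 1) * Real.exp (-(n * ρ s)) ≤
      Real.exp (4 / 27) := by
    have h := exp_div_three_sub_one_mul_exp_neg_le (n * ρ s)
    rw [mul_div_right_comm] at h
    linarith [Real.add_one_le_exp (4 / 27 : ℝ)]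
  have hfactor_nonneg (s : S) :
      0 ≤ 1 + (Real.exp (n / 3 * ρ s) - 1) * Real.exp (-(n * ρ s)) := by
    have : 1 ≤ Real.exp (n / 3 * ρ s) :=
      Real.one_le_exp (mul_nonneg (by positivity) (hρ.1 s))
    exact add_nonneg zero_le_one (mul_nonneg (sub_nonneg.2 this) (Real.exp_pos _).le)
  calc _ ≤ ∏ s, (1 + (Real.exp (n / 3 * ρ s) - 1) * Real.exp (-(n * ρ s))) :=
        sum_prod_mul_exp_missingMass_le hρ (by positivity)
    _ ≤ ∏ _s : S, Real.exp (4 / 27) :=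
        prod_le_prod (fun s _ => hfactor_nonneg s) fun s _ => hfactor s
    _ = Real.exp (Fintype.card S * (4 / 27)) := by
        rw [prod_const, card_univ, Real.exp_nat_mul]

end MissingMass

section Dataset

variable {S A : Type} [Fintype S] [Fintype A] {n : ℕ} {ρ : S → ℝ} {π π' : S → A → ℝ}

lemma sum_wt_mul_comp_fst (hπ : IsCondDist π) (F : (Fin n → S) → ℝ) :
    ∑ D : Fin n → S × A, wt ρ π D * F (Prod.fst ∘ D) =
      ∑ x : Fin n → S, (∏ i, ρ (x i)) * F x := by
  have hlabels (x : Fin n → S) : ∑ a : Fin n → A, ∏ i, π (x i) (a i) = 1 := by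
    rw [← Fintype.prod_sum]
    exact prod_eq_one fun i _ => (hπ (x i)).2
  rw [← (Equiv.arrowProdEquivProdArrow (Fin n) (fun _ => S) fun _ => A).symm.sum_comp,
    Fintype.sum_prod_type]
  refine sum_congr rfl fun x _ => ?_
  calc _ = ∑ a : Fin n → A, (∏ i, ρ (x i)) * F x * ∏ i, π (x i) (a i) := by
        refine sum_congr rfl fun a _ => ?_
        simp only [wt, Equiv.arrowProdEquivProdArrow, Equiv.coe_fn_symm_mk, prod_mul_distrib,
          Function.comp_def]
        ring
    _ = (∏ i, ρ (x i)) * F x := by rw [← mul_sum, hlabels, mul_one]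

lemma isDist_wt (hρ : IsDist ρ) (hπ : IsCondDist π) :
    IsDist (wt ρ π : (Fin n → S × A) → ℝ) := by
  refine ⟨fun D => prod_nonneg fun i _ => mul_nonneg (hρ.1 _) ((hπ _).1 _), ?_⟩
  simpa only [mul_one, ← Fintype.sum_pow, hρ.2, one_pow] using
    sum_wt_mul_comp_fst (n := n) (ρ := ρ) hπ fun _ => 1

lemma IsDist.half_sum_abs_sub_le_one {p q : A → ℝ} (hp : IsDist p) (hq : IsDist q) :
    1 / 2 * ∑ a, |p a - q a| ≤ 1 := by
  have h : ∑ a, |p a - q a| ≤ ∑ a, (p a + q a) := sum_le_sum fun a _ =>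
    abs_le.2 ⟨by linarith [hp.1 a], by linarith [hq.1 a]⟩
  rw [sum_add_distrib, hp.2, hq.2] at h
  linarith

lemma condTV_le_missingMass {ι : Type*} {x : ι → S} (hρ : ∀ s, 0 ≤ ρ s) (hπ : IsCondDist π)
    (hπ' : IsCondDist π') (hagree : ∀ i, π (x i) = π' (x i)) :
    condTV ρ π π' ≤ missingMass ρ x := by
  rw [condTV, missingMass, unseen, sum_filter]
  refine sum_le_sum fun s _ => ?_
  by_cases hs : s ∈ Set.range x
  · obtain ⟨i, rfl⟩ := hs
    simp [hagree i]
  · rw [if_pos hs]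
    exact mul_le_of_le_one_right (hρ s) ((hπ s).half_sum_abs_sub_le_one (hπ' s))

theorem one_sub_le_sum_ite_missingMass_le (hρ : IsDist ρ) (hπ : IsCondDist π) (hn : 0 < n)
    {δ : ℝ} (hδ : 0 < δ) :
    1 - δ ≤ ∑ D : Fin n → S × A,
      if missingMass ρ (Prod.fst ∘ D) ≤
          4 * (Fintype.card S : ℝ) / (9 * n) + 3 * Real.log (1 / δ) / n
        then wt ρ π D else 0 := by
  have hmgf := sum_prod_mul_exp_third_missingMass_le hρ n
  rw [← sum_wt_mul_comp_fst hπ fun x => Real.exp (n / 3 * missingMass ρ x)] at hmgf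
  convert one_sub_exp_le_sum_ite_of_sum_mul_exp_le (isDist_wt hρ hπ) (by positivity) hmgf
    (4 * (Fintype.card S : ℝ) / (9 * n) + 3 * Real.log (1 / δ) / n) using 2
  have hexponent : Fintype.card S * (4 / 27) -
      n / 3 * (4 * (Fintype.card S : ℝ) / (9 * n) + 3 * Real.log (1 / δ) / n) = Real.log δ := by
    rw [one_div, Real.log_inv]
    field_simp
    ring
  rw [hexponent, Real.exp_log hδ]

theorem stmt_13_general (hρ : IsDist ρ) (hπ : IsCondDist π) (hn : 0 < n)
    {est : (Fin n → S × A) → S → A → ℝ} (hest : ∀ D, IsCondDist (est D))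
    (hmatch : ∀ D s, (∃ i : Fin n, (D i).1 = s) → ∀ a, est D s a = π s a)
    {δ : ℝ} (hδ : 0 < δ) :
    1 - δ ≤ ∑ D : Fin n → S × A,
      if condTV ρ (est D) π ≤
          4 * (Fintype.card S : ℝ) / (9 * n) + 3 * Real.log (1 / δ) / n
        then wt ρ π D else 0 :=
  (one_sub_le_sum_ite_missingMass_le hρ hπ hn hδ).trans <|
    sum_ite_le_sum_ite (isDist_wt hρ hπ).1 fun D hD =>
      (condTV_le_missingMass hρ.1 (hest D) hπ fun i => funext (hmatch D _ ⟨i, rfl⟩)).trans hD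

end Dataset

/-- high-probability upper bound for any learner matching the full
teacher distribution `π*(·|s)` at every visited input `s` (a KL minimizer with
full soft labels). -/
theorem stmt_13 (S A : Type) [Fintype S] [Fintype A] [Nonempty S] [Nonempty A]
    (ρ : S → ℝ) (πs : S → A → ℝ) (hρ : IsDist ρ) (hπs : IsCondDist πs)
    (n : ℕ) (hn : 0 < n)
    (est : (Fin n → S × A) → S → A → ℝ)
    (hest : ∀ D, IsCondDist (est D))
    (hmatch : ∀ D s, (∃ i : Fin n, (D i).1 = s) → ∀ a, est D s a = πs s a)
    (δ : ℝ) (hδ0 : 0 < δ) (hδ1 : δ ≤ 1 / 10) :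
    1 - δ ≤
      ∑ D : Fin n → S × A,
        if condTV ρ (est D) πs ≤
            4 * (Fintype.card S : ℝ) / (9 * n) +
            3 * Real.sqrt (Fintype.card S : ℝ) * Real.log (1 / δ) / n
          then wt ρ πs D else 0 := by
  refine (stmt_13_general hρ hπs hn hest hmatch hδ0).trans
    (sum_ite_le_sum_ite (isDist_wt hρ hπs).1 fun D hD => hD.trans ?_)
  have hlog : 0 ≤ Real.log (1 / δ) := Real.log_nonneg ((one_le_div hδ0).2 (by linarith))
  have hsqrt : 1 ≤ √(Fintype.card S : ℝ) := Real.one_le_sqrt.2 (mod_cast Fintype.card_pos)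
  gcongr
  linarith
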